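/- Let R ⊆ S be an integral FCP ring extension and let T ∈ [R,S] be the t-closure of R in S (i.e., R ⊆ T is infra-integral and T ⊆ S is t-closed). Then R ⊆ S is catenarian if and only if T ⊆ S is catenarian and R ⊆ S is 2-catenarian, i.e., whenever A, B, C ∈ [R,S] with B covering A and C covering B, every maximal chain of [R,S] from A to C has length 2. -/

import Mathlib

/-!
Completing chains below and above shows that subintervals of a catenarian extension are catenarian;
this gives the forward implication.

For the converse, a minimal step `A ⊂ B` of a chain is either infra-integral or t-closed, and never
both. If a t-closed step `A ⊂ B` is followed by an infra-integral step `B ⊂ C`, then `A` is not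
t-closed in `C`, so there is an infra-integral `A ⊂ D` with `D ⊂ C`; being 2-catenarian forces
`A ⊂ D ⊂ C` to be two minimal steps, now with the infra-integral one first and the t-closed one
second. By such exchanges every maximal chain from `R` to `S` is replaced by one of the same length
that runs through infra-integral steps up to some `U` and through t-closed steps from `U` on, and
then `U` is the t-closure `T`.

The part from `T` to `S` has constant length by hypothesis. So has the part from `R` to `T`: if
`R ⊆ B` is infra-integral and `B` covers `A`, then `B ⧸ A` is a simple `R`-module, so the
Jordan–Hölder theorem for `R`-submodules applies.
-/

/-- A maximal chain of length `n` from `T` to `U`: each step is a covering. -/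
def IsMaxChainFromTo {α : Type*} [PartialOrder α] (T U : α) (n : ℕ)
    (c : Fin (n + 1) → α) : Prop :=
  c 0 = T ∧ c (Fin.last n) = U ∧ ∀ i : Fin n, c i.castSucc ⋖ c i.succ

/-- The subextension determined by `T ≤ U` is catenarian: all maximal chains from
`T` to `U` have the same length. -/
def IsCatenarianFromTo {α : Type*} [PartialOrder α] (T U : α) : Prop :=
  ∀ (n m : ℕ) (c : Fin (n + 1) → α) (d : Fin (m + 1) → α),
    IsMaxChainFromTo T U n c → IsMaxChainFromTo T U m d → n = m

/-- The extension `R ⊆ S` has FCP: every chain of `R`-subalgebras of `S` is finite. -/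
def IsFCPExt (R S : Type*) [CommRing R] [CommRing S] [Algebra R S] : Prop :=
  ∀ C : Set (Subalgebra R S), IsChain (· ≤ ·) C → C.Finite

/-- The extension `R ⊆ S` is catenarian. -/
def IsCatenarianExt (R S : Type*) [CommRing R] [CommRing S] [Algebra R S] : Prop :=
  IsCatenarianFromTo (⊥ : Subalgebra R S) ⊤

/-- The length `ℓ[T,U]`: the supremum of lengths of chains from `T` to `U`. -/
noncomputable def extLength {α : Type*} [PartialOrder α] (T U : α) : ℕ :=
  sSup {n | ∃ c : Fin (n + 1) → α, StrictMono c ∧ c 0 = T ∧ c (Fin.last n) = U}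

/-- The residual extension `κ_R(P) → κ_S(Q)` (for `P = Q ∩ R`) is an isomorphism. -/
def ResidualExtIsIso {R S : Type*} [CommRing R] [CommRing S] (f : R →+* S)
    (Q : Ideal S) [Q.IsPrime] : Prop :=
  Function.Bijective
    (IsLocalRing.ResidueField.map
      (Localization.localRingHom (Q.comap f) Q f rfl))

/-- `R ⊆ S` is infra-integral: it is integral and all residual extensions
are isomorphisms. -/
def IsInfraIntegral (R S : Type*) [CommRing R] [CommRing S] [Algebra R S] : Prop :=
  Algebra.IsIntegral R S ∧
    ∀ (Q : Ideal S) (_ : Q.IsPrime), ResidualExtIsIso (algebraMap R S) Q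

/-- The subextension `T ⊆ S` is t-closed. -/
def IsTClosedIn {R S : Type*} [CommRing R] [CommRing S] [Algebra R S]
    (T : Subalgebra R S) : Prop :=
  ∀ (b : S), ∀ r ∈ T, b ^ 2 - r * b ∈ T → b ^ 3 - r * b ^ 2 ∈ T → b ∈ T

/-- `T` is the t-closure of `R` in `S`: `R ⊆ T` is infra-integral and `T ⊆ S`
is t-closed. -/
def IsTClosure {R S : Type*} [CommRing R] [CommRing S] [Algebra R S]
    (T : Subalgebra R S) : Prop :=
  IsInfraIntegral R T ∧ IsTClosedIn T

/-- The extension `R ⊆ S` is 2-catenarian: every 2-minimal subextension has length 2. -/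
def IsTwoCatenarian (R S : Type*) [CommRing R] [CommRing S] [Algebra R S] : Prop :=
  ∀ A B C : Subalgebra R S, A ⋖ B → B ⋖ C →
    ∀ (n : ℕ) (c : Fin (n + 1) → Subalgebra R S),
      IsMaxChainFromTo A C n c → n = 2

/-! ### Paths of a relation -/

section Steps

variable {α : Type*} {r s : α → α → Prop} {n m : ℕ} {a b c : α}

/-- `Steps r n a b`: the element `b` can be reached from `a` by exactly `n` steps of the relation
`r`. For `r = (· ⋖ ·)` this says that there is a maximal chain of length `n` from `a` to `b`. -/
inductive Steps (r : α → α → Prop) : ℕ → α → α → Prop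
  | nil (a : α) : Steps r 0 a a
  | cons {n : ℕ} {a b c : α} : r a b → Steps r n b c → Steps r (n + 1) a c

theorem Steps.append (hab : Steps r n a b) (hbc : Steps r m b c) : Steps r (n + m) a c := by
  induction hab with
  | nil => rwa [Nat.zero_add]
  | cons h _ ih => exact Nat.add_right_comm .. ▸ .cons h (ih hbc)

theorem Steps.imp (hrs : ∀ a b, r a b → s a b) (h : Steps r n a b) : Steps s n a b := by
  induction h with
  | nil a => exact .nil a
  | cons h _ ih => exact .cons (hrs _ _ h) ih

theorem Steps.rel_of_cons (hrefl : ∀ a, s a a) (hcons : ∀ a b c, r a b → s b c → s a c)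
    (h : Steps r n a b) : s a b := by
  induction h with
  | nil a => exact hrefl a
  | cons h _ ih => exact hcons _ _ _ h ih

theorem steps_one : Steps r 1 a b ↔ r a b :=
  ⟨fun | .cons h (.nil _) => h, fun h => .cons h (.nil b)⟩

theorem Steps.length_pos (h : Steps r n a b) (hab : a ≠ b) : 0 < n := by
  cases h with
  | nil => exact absurd rfl hab
  | cons => exact Nat.succ_pos _

theorem Steps.exists_snoc_comm (hrs : ∀ a b c, s a b → r b c → ∃ d, r a d ∧ s d c)
    (hab : s a b) (hbc : Steps r n b c) : ∃ d, Steps r n a d ∧ s d c := by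
  induction hbc generalizing a with
  | nil => exact ⟨a, .nil a, hab⟩
  | cons h _ ih =>
    obtain ⟨d, had, hdb⟩ := hrs _ _ _ hab h
    obtain ⟨e, hde, hec⟩ := ih hdb
    exact ⟨e, .cons had hde, hec⟩

theorem Steps.exists_sorted (hrs : ∀ a b c, s a b → r b c → ∃ d, r a d ∧ s d c)
    (h : Steps (fun x y => r x y ∨ s x y) n a b) :
    ∃ p q c, p + q = n ∧ Steps r p a c ∧ Steps s q c b := by
  induction h with
  | nil a => exact ⟨0, 0, a, rfl, .nil a, .nil a⟩
  | cons h _ ih =>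
    obtain ⟨p, q, c, rfl, hp, hq⟩ := ih
    rcases h with h | h
    · exact ⟨p + 1, q, c, Nat.add_right_comm .., .cons h hp, hq⟩
    · obtain ⟨d, hp', hdc⟩ := hp.exists_snoc_comm hrs h
      exact ⟨p, q + 1, d, rfl, hp', .cons hdc hq⟩

theorem steps_iff_exists_fin : Steps r n a b ↔ ∃ c : Fin (n + 1) → α,
    c 0 = a ∧ c (Fin.last n) = b ∧ ∀ i : Fin n, r (c i.castSucc) (c i.succ) := by
  constructor
  · intro h
    induction h with
    | nil a => exact ⟨fun _ => a, rfl, rfl, nofun⟩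
    | @cons n a b _ hab _ ih =>
      obtain ⟨c, rfl, rfl, hc⟩ := ih
      exact ⟨Fin.cons a c, rfl, rfl, Fin.cases hab hc⟩
  · rintro ⟨c, rfl, rfl, hc⟩
    induction n with
    | zero => exact .nil _
    | succ n ih => exact .cons (hc 0) (ih (c ∘ Fin.succ) fun i => hc i.succ)

end Steps

/-! ### Maximal chains in ordered sets -/

section Order

variable {α β : Type*} [PartialOrder α] [PartialOrder β] {a b c d : α}

theorem steps_covBy_iff {n : ℕ} :
    Steps (· ⋖ ·) n a b ↔ ∃ c : Fin (n + 1) → α, IsMaxChainFromTo a b n c :=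
  steps_iff_exists_fin

theorem isCatenarianFromTo_iff : IsCatenarianFromTo a b ↔
    ∀ n m, Steps (· ⋖ ·) n a b → Steps (· ⋖ ·) m a b → n = m := by
  simp only [steps_covBy_iff, IsCatenarianFromTo]
  exact ⟨fun h n m ⟨c, hc⟩ ⟨d, hd⟩ => h n m c d hc hd,
    fun h n m c d hc hd => h n m ⟨c, hc⟩ ⟨d, hd⟩⟩

theorem IsCatenarianFromTo.of_map (f : α → β)
    (hf : ∀ x y, a ≤ x → y ≤ b → x ⋖ y → f x ⋖ f y) (h : IsCatenarianFromTo (f a) (f b)) :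
    IsCatenarianFromTo a b := by
  rintro n m c d ⟨rfl, rfl, hc⟩ ⟨hd0, hdm, hd⟩
  have hmono {k : ℕ} {e : Fin (k + 1) → α} (he : ∀ i : Fin k, e i.castSucc ⋖ e i.succ) :
      Monotone e := Fin.monotone_iff_le_succ.2 fun i => (he i).le
  refine h n m (f ∘ c) (f ∘ d) ⟨rfl, rfl, fun i => ?_⟩
    ⟨congrArg f hd0, congrArg f hdm, fun i => ?_⟩
  · exact hf _ _ (hmono hc (Fin.zero_le _)) (hmono hc (Fin.le_last _)) (hc i)
  · exact hf _ _ (hd0.ge.trans (hmono hd (Fin.zero_le _)))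
      ((hmono hd (Fin.le_last _)).trans hdm.le) (hd i)

theorem isCatenarianFromTo_of_isModularLattice {γ : Type*} [Lattice γ] [IsModularLattice γ]
    (x y : γ) : IsCatenarianFromTo x y := by
  rintro n m c d ⟨hc0, hcn, hc⟩ ⟨hd0, hdm, hd⟩
  exact (CompositionSeries.jordan_holder ⟨n, c, hc⟩ ⟨m, d, hd⟩ (hc0.trans hd0.symm)
    (hcn.trans hdm.symm)).length_eq

theorem wellFoundedGT_of_forall_isChain_finite
    (h : ∀ C : Set α, IsChain (· ≤ ·) C → C.Finite) : WellFoundedGT α := by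
  refine ⟨RelEmbedding.wellFounded_iff_isEmpty.2 ⟨fun f => ?_⟩⟩
  have hf : StrictMono f := fun i j hij => f.map_rel_iff.2 hij
  exact Set.infinite_range_of_injective f.injective (h _ hf.monotone.isChain_range)

theorem wellFoundedLT_of_forall_isChain_finite
    (h : ∀ C : Set α, IsChain (· ≤ ·) C → C.Finite) : WellFoundedLT α :=
  wellFoundedGT_dual_iff α |>.1 <|
    wellFoundedGT_of_forall_isChain_finite (α := αᵒᵈ) fun C hC => h C hC.symm

variable [WellFoundedLT α] [WellFoundedGT α]

theorem exists_steps_covBy (hab : a ≤ b) : ∃ n, Steps (· ⋖ ·) n a b := by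
  obtain ⟨c, rfl, n, rfl, hc⟩ := exists_covBy_seq_of_wellFoundedLT_wellFoundedGT_of_le hab
  exact ⟨n, steps_covBy_iff.2 ⟨fun i => c i, rfl, rfl, fun i => hc i i.2⟩⟩

theorem IsCatenarianFromTo.mono (h : IsCatenarianFromTo a d) (hab : a ≤ b) (hcd : c ≤ d) :
    IsCatenarianFromTo b c := by
  rw [isCatenarianFromTo_iff] at h ⊢
  intro n m hn hm
  obtain ⟨p, hp⟩ := exists_steps_covBy hab
  obtain ⟨q, hq⟩ := exists_steps_covBy hcd
  have := h _ _ ((hp.append hn).append hq) ((hp.append hm).append hq)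
  omega

theorem covBy_and_covBy_of_forall_steps_eq_two (h : ∀ n, Steps (· ⋖ ·) n a c → n = 2)
    (hab : a < b) (hbc : b < c) : a ⋖ b ∧ b ⋖ c := by
  obtain ⟨p, hp⟩ := exists_steps_covBy hab.le
  obtain ⟨q, hq⟩ := exists_steps_covBy hbc.le
  have hpq := h _ (hp.append hq)
  have hp0 := hp.length_pos hab.ne
  have hq0 := hq.length_pos hbc.ne
  obtain rfl : p = 1 := by omega
  obtain rfl : q = 1 := by omega
  exact ⟨steps_one.1 hp, steps_one.1 hq⟩

end Order

section Extension

variable {R S : Type*} [CommRing R] [CommRing S] [Algebra R S] {A B C T : Subalgebra R S}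

/-! ### The conductor of a minimal extension -/

/-- The conductor `(A : B) = {x ∈ S | x B ⊆ A}`. It is contained in `A`, because `1 ∈ B`, and it
is an ideal of `B` when `A ≤ B`; it is encoded as an `R`-submodule of `S`. -/
def relConductor (A B : Subalgebra R S) : Submodule R S :=
  A.toSubmodule / B.toSubmodule

theorem mem_relConductor {x : S} : x ∈ relConductor A B ↔ ∀ b ∈ B, x * b ∈ A :=
  Submodule.mem_div_iff_forall_mul_mem

theorem mem_of_mem_relConductor {x : S} (hx : x ∈ relConductor A B) : x ∈ A := by
  simpa using mem_relConductor.1 hx 1 B.one_mem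

theorem mul_mem_relConductor {x b : S} (hx : x ∈ relConductor A B) (hb : b ∈ B) :
    x * b ∈ relConductor A B := by
  rw [mem_relConductor] at hx ⊢
  exact fun c hc => mul_assoc x b c ▸ hx _ (B.mul_mem hb hc)

theorem one_mem_relConductor : 1 ∈ relConductor A B ↔ B ≤ A := by
  simp [mem_relConductor, SetLike.le_def]

theorem relConductor_le_relConductor_of_le (h : relConductor B C ≤ A.toSubmodule) :
    relConductor B C ≤ relConductor A C :=
  fun _ hx => mem_relConductor.2 fun _ hc => h (mul_mem_relConductor hx hc)

theorem mem_of_mul_sub_one_mem_relConductor {b r s : S} (hb : b ∈ B) (hr : r ∈ A)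
    (hrs : r * s - 1 ∈ relConductor A B) (hsb : s * b ∈ A) : b ∈ A := by
  have hb_eq : b = r * (s * b) - (r * s - 1) * b := by ring
  rw [hb_eq]
  exact A.sub_mem (A.mul_mem hr hsb) (mem_relConductor.1 hrs b hb)

theorem le_or_toSubmodule_sup_eq_of_covBy (h : A ⋖ B) {N : Submodule R S} (hNB : N ≤ B.toSubmodule)
    (hAN : A.toSubmodule * N ≤ N) (hNN : N * N ≤ A.toSubmodule ⊔ N) :
    N ≤ A.toSubmodule ∨ A.toSubmodule ⊔ N = B.toSubmodule := by
  set P := A.toSubmodule ⊔ N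
  have hPP : P * P ≤ P := by
    rw [Submodule.mul_sup, Submodule.sup_mul, Submodule.sup_mul, mul_comm N,
      A.isIdempotentElem_toSubmodule]
    exact sup_le (sup_le le_sup_left (hAN.trans le_sup_right))
      (sup_le (hAN.trans le_sup_right) hNN)
  let D : Subalgebra R S := P.toSubalgebra (le_sup_left (a := A.toSubmodule) A.one_mem)
    fun _ _ hx hy => hPP (Submodule.mul_mem_mul hx hy)
  have hD : D.toSubmodule = P := Submodule.toSubalgebra_toSubmodule ..
  have hAD : A ≤ D := Subalgebra.toSubmodule.le_iff_le.1 (hD ▸ le_sup_left)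
  have hDB : D ≤ B :=
    Subalgebra.toSubmodule.le_iff_le.1 (hD ▸ sup_le (Subalgebra.toSubmodule.monotone h.le) hNB)
  rcases h.eq_or_eq hAD hDB with hDA | hDB
  · exact .inl (by rw [← hDA, hD]; exact le_sup_right)
  · exact .inr (by rw [← hDB, hD])

theorem mem_relConductor_or_exists_add_mul (h : A ⋖ B) {x : S} (hx : x ∈ B) :
    x ∈ relConductor A B ∨ ∀ y ∈ B, ∃ a ∈ A, ∃ b ∈ B, a + x * b = y := by
  set N := (R ∙ x) * B.toSubmodule with hN_def
  have hBN : B.toSubmodule * N = N := by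
    rw [hN_def, mul_left_comm, B.isIdempotentElem_toSubmodule]
  have hNB : N ≤ B.toSubmodule := by
    rw [← B.isIdempotentElem_toSubmodule.eq]
    exact mul_le_mul' ((Submodule.span_singleton_le_iff_mem ..).2 hx) le_rfl
  have hAN : A.toSubmodule * N ≤ N :=
    (mul_le_mul' (Subalgebra.toSubmodule.monotone h.le) le_rfl).trans_eq hBN
  have hNN : N * N ≤ A.toSubmodule ⊔ N :=
    ((mul_le_mul' hNB le_rfl).trans_eq hBN).trans le_sup_right
  refine (le_or_toSubmodule_sup_eq_of_covBy h hNB hAN hNN).imp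
    (fun hNA => mem_relConductor.2 fun b hb => ?_) fun hN y hy => ?_
  · exact hNA (Submodule.mem_span_singleton_mul.2 ⟨b, hb, rfl⟩)
  · rw [← Subalgebra.mem_toSubmodule, ← hN, Submodule.mem_sup] at hy
    obtain ⟨a, ha, z, hz, rfl⟩ := hy
    obtain ⟨b, hb, rfl⟩ := Submodule.mem_span_singleton_mul.1 hz
    exact ⟨a, ha, b, hb, rfl⟩

theorem restrictScalars_adjoin_singleton_eq_of_covBy (h : A ⋖ B) {x : S} (hx : x ∈ B)
    (hxA : x ∉ A) : (Algebra.adjoin A {x}).restrictScalars R = B := by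
  have hxD : x ∈ (Algebra.adjoin A {x}).restrictScalars R :=
    Algebra.self_mem_adjoin_singleton A x
  refine (h.eq_or_eq ?_ ?_).resolve_left fun hA => hxA (hA ▸ hxD)
  · exact fun a ha => (Algebra.adjoin A {x}).algebraMap_mem ⟨a, ha⟩
  · rw [Algebra.restrictScalars_adjoin, Algebra.adjoin_le_iff]
    exact Set.union_subset h.le (Set.singleton_subset_iff.2 hx)

/-- The conductor `(A : B)` as an ideal of `A`, for `A ≤ B`. The submodule `1 : Submodule A S` is
the image of `A` in `S`. -/
def conductorIdeal (A B : Subalgebra R S) : Ideal A :=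
  (1 : Submodule A S).colon (B : Set S)

theorem mem_conductorIdeal {a : A} : a ∈ conductorIdeal A B ↔ (a : S) ∈ relConductor A B := by
  simp [conductorIdeal, Submodule.mem_colon, mem_relConductor, Submodule.mem_one, Algebra.smul_def]

section Integral

variable [Algebra.IsIntegral R S]

-- For `a ∈ A` outside the conductor, `B = A + a B`; as `B` is a finite `A`-module, Nakayama's
-- lemma yields `r ∈ 1 + a A` with `r B ⊆ A`.
theorem isMaximal_conductorIdeal (h : A ⋖ B) : (conductorIdeal A B).IsMaximal := by
  refine Ideal.isMaximal_iff.2 ⟨fun h1 => ?_, fun J a hJ ha haJ => ?_⟩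
  · exact h.lt.not_ge (one_mem_relConductor.1 (mem_conductorIdeal.1 h1))
  obtain ⟨x, hx, hxA⟩ := SetLike.exists_of_lt h.lt
  let P : Submodule A S := Subalgebra.toSubmodule (Algebra.adjoin A {x})
  have hP (y : S) : y ∈ P ↔ y ∈ B := by
    rw [← restrictScalars_adjoin_singleton_eq_of_covBy h hx hxA]
    rfl
  have hPfg : P.FG := ((Algebra.IsIntegral.isIntegral (R := R) x).tower_top).fg_adjoin_singleton
  have hsup : P ≤ 1 ⊔ Ideal.span {a} • P := by
    intro y hy
    obtain ⟨c, hc, b, hb, rfl⟩ := (mem_relConductor_or_exists_add_mul h (h.le a.2)).resolve_left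
      (fun h => ha (mem_conductorIdeal.2 h)) y ((hP y).1 hy)
    refine Submodule.add_mem_sup (Submodule.mem_one.2 ⟨⟨c, hc⟩, rfl⟩) ?_
    exact Submodule.smul_mem_smul (Ideal.mem_span_singleton_self a) ((hP b).2 hb)
  obtain ⟨r, hr, hrP⟩ := Submodule.exists_sub_one_mem_and_smul_le_of_fg_of_le_sup hPfg le_rfl hsup
  have hr_mem : r ∈ conductorIdeal A B :=
    Submodule.mem_colon.2 fun b hb => hrP (Submodule.smul_mem_pointwise_smul b r P ((hP b).2 hb))
  simpa using J.sub_mem (hJ hr_mem) ((Ideal.span_singleton_le_iff_mem J).2 haJ hr)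

theorem exists_mul_sub_one_mem_relConductor (h : A ⋖ B) {a : S} (ha : a ∈ A)
    (hac : a ∉ relConductor A B) : ∃ a' ∈ A, a * a' - 1 ∈ relConductor A B := by
  obtain ⟨c, i, hi, hci⟩ := (isMaximal_conductorIdeal h).exists_inv
    (x := ⟨a, ha⟩) (mt mem_conductorIdeal.1 hac)
  refine ⟨c, c.2, ?_⟩
  have hci' : (c : S) * a + i = 1 := congrArg Subtype.val hci
  have hsub : a * c - 1 = -(i : S) := by linear_combination hci'
  rw [hsub]
  exact neg_mem (mem_conductorIdeal.1 hi)

theorem exists_isMaximal_forall_mem_iff (h : A ⋖ B) :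
    ∃ Q : Ideal S, Q.IsMaximal ∧ ∀ a ∈ A, a ∈ Q ↔ a ∈ relConductor A B := by
  have := Algebra.IsIntegral.tower_top (R := R) (S := A) (T := S)
  have := isMaximal_conductorIdeal h
  obtain ⟨Q, hQ, hQA⟩ := Ideal.exists_ideal_over_maximal_of_isIntegral (S := S)
    (conductorIdeal A B) (by simp)
  refine ⟨Q, hQ, fun a ha => ?_⟩
  rw [← mem_conductorIdeal (a := ⟨a, ha⟩), ← hQA]
  rfl

end Integral

/-! ### Infra-integral and t-closed subextensions -/

/-- `A ⊆ B` is infra-integral, for subalgebras of an integral `R`-algebra `S`: at every maximal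
ideal `Q` of `S`, the images of `A` and `B` in the residue field `S ⧸ Q` agree. By integrality,
these images are the residue fields of `A` and `B` below `Q`. -/
def IsRelInfraIntegral (A B : Subalgebra R S) : Prop :=
  ∀ Q : Ideal S, Q.IsMaximal →
    B.map (Ideal.Quotient.mkₐ R Q) ≤ A.map (Ideal.Quotient.mkₐ R Q)

/-- `A` is t-closed in `B`, for subalgebras of an `R`-algebra `S`. -/
def IsRelTClosed (A B : Subalgebra R S) : Prop :=
  ∀ b ∈ B, ∀ r ∈ A, b ^ 2 - r * b ∈ A → b ^ 3 - r * b ^ 2 ∈ A → b ∈ A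

theorem isRelInfraIntegral_iff : IsRelInfraIntegral A B ↔
    ∀ Q : Ideal S, Q.IsMaximal → ∀ b ∈ B, ∃ a ∈ A, b - a ∈ Q := by
  simp only [IsRelInfraIntegral, Subalgebra.map_le]
  refine forall₂_congr fun Q _ => forall₂_congr fun b _ => ?_
  refine exists_congr fun a => and_congr_right fun _ => ?_
  exact eq_comm.trans Ideal.Quotient.eq

theorem IsRelInfraIntegral.refl (A : Subalgebra R S) : IsRelInfraIntegral A A :=
  fun _ _ => le_rfl

theorem IsRelInfraIntegral.trans (h : IsRelInfraIntegral A B) (h' : IsRelInfraIntegral B C) :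
    IsRelInfraIntegral A C :=
  fun Q hQ => (h' Q hQ).trans (h Q hQ)

theorem IsRelInfraIntegral.mono {A' B' : Subalgebra R S} (h : IsRelInfraIntegral A B)
    (hA : A ≤ A') (hB : B' ≤ B) : IsRelInfraIntegral A' B' :=
  fun Q hQ => (Subalgebra.map_mono hB).trans ((h Q hQ).trans (Subalgebra.map_mono hA))

theorem IsRelTClosed.refl (A : Subalgebra R S) : IsRelTClosed A A :=
  fun _ hb _ _ _ _ => hb

theorem isRelTClosed_top : IsRelTClosed T ⊤ ↔ IsTClosedIn T :=
  forall_congr' fun _ => forall_prop_of_true Algebra.mem_top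

theorem IsRelTClosed.trans (h : IsRelTClosed A B) (hAB : A ≤ B) (h' : IsRelTClosed B C) :
    IsRelTClosed A C :=
  fun c hc r hr h2 h3 => h c (h' c hc r (hAB hr) (hAB h2) (hAB h3)) r hr h2 h3

theorem IsRelTClosed.mem_of_sq_sub_mul_mem (ht : IsRelTClosed A B) {x r : S} (hx : x ∈ B)
    (hr : r ∈ A) (h : x ^ 2 - r * x ∈ relConductor A B) : x ∈ A := by
  refine ht x hx r hr (mem_of_mem_relConductor h) ?_
  have hcube : x ^ 3 - r * x ^ 2 = (x ^ 2 - r * x) * x := by ring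
  exact hcube ▸ mem_relConductor.1 h x hx

theorem IsRelTClosed.mul_mem_of_mem_relConductor (ht : IsRelTClosed A C) (hAC : A ≤ C)
    {m b r : S} (hm : m ∈ relConductor A B) (hb : b ∈ C) (hr : r ∈ B) (h2 : b ^ 2 - r * b ∈ B)
    (h3 : b ^ 3 - r * b ^ 2 ∈ B) : m * b ∈ A := by
  have hmA := mem_of_mem_relConductor hm
  have hsq : (m * b) ^ 2 - m * r * (m * b) = m * (m * (b ^ 2 - r * b)) := by ring
  have hcube : (m * b) ^ 3 - m * r * (m * b) ^ 2 = m ^ 2 * (m * (b ^ 3 - r * b ^ 2)) := by ring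
  rw [mem_relConductor] at hm
  exact ht (m * b) (C.mul_mem (hAC hmA) hb) (m * r) (hm r hr)
    (hsq ▸ A.mul_mem hmA (hm _ h2)) (hcube ▸ A.mul_mem (A.pow_mem hmA 2) (hm _ h3))

theorem isTClosedIn_of_field {K : Type*} [Field K] [Algebra R K] [Algebra.IsIntegral R K]
    (A : Subalgebra R K) : IsTClosedIn A := by
  intro b r hr h2 h3
  by_cases hβ : b ^ 2 - r * b = 0
  · have hmul : b * (b - r) = 0 := by linear_combination hβ
    rcases mul_eq_zero.1 hmul with rfl | hbr
    · exact A.zero_mem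
    · exact sub_eq_zero.1 hbr ▸ hr
  · have := Algebra.IsIntegral.tower_top (R := R) (S := A) (T := K)
    have hA : IsField A := isField_of_isIntegral_of_isField
      (FaithfulSMul.algebraMap_injective A K) (Field.toIsField K)
    obtain ⟨c, hc⟩ := hA.mul_inv_cancel (a := ⟨_, h2⟩) (Subtype.coe_ne_coe.1 hβ)
    have hc' : (b ^ 2 - r * b) * c = 1 := congrArg Subtype.val hc
    have hb : b = c * (b ^ 3 - r * b ^ 2) := by linear_combination -b * hc'
    exact hb ▸ A.mul_mem c.2 h3

theorem exists_sup_mul_span_singleton_eq_of_not_isRelTClosed (h : A ⋖ B)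
    (ht : ¬ IsRelTClosed A B) :
    ∃ b ∈ B, A.toSubmodule ⊔ A.toSubmodule * (R ∙ b) = B.toSubmodule := by
  simp only [IsRelTClosed, not_forall] at ht
  obtain ⟨b, hb, r, hr, h2, -, hbA⟩ := ht
  refine ⟨b, hb, ?_⟩
  set N := A.toSubmodule * (R ∙ b) with hN_def
  have mul_mem_N {a : S} (ha : a ∈ A) : a * b ∈ N :=
    Submodule.mul_mem_mul ha (Submodule.mem_span_singleton_self b)
  have hAN : A.toSubmodule * N = N := by
    rw [hN_def, ← mul_assoc, A.isIdempotentElem_toSubmodule]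
  have hNB : N ≤ B.toSubmodule := Submodule.mul_le.2 fun a ha z hz =>
    B.mul_mem (h.le ha) ((Submodule.span_singleton_le_iff_mem b B.toSubmodule).2 hb hz)
  have hbb : (R ∙ b) * (R ∙ b) ≤ A.toSubmodule ⊔ N := by
    rw [Submodule.span_mul_span, Set.singleton_mul_singleton, Submodule.span_singleton_le_iff_mem]
    have hb_sq : b * b = (b ^ 2 - r * b) + r * b := by ring
    exact hb_sq ▸ Submodule.add_mem_sup h2 (mul_mem_N hr)
  have hNN : N * N ≤ A.toSubmodule ⊔ N := calc
    N * N = A.toSubmodule * ((R ∙ b) * (R ∙ b)) := by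
      rw [hN_def, mul_mul_mul_comm, A.isIdempotentElem_toSubmodule]
    _ ≤ A.toSubmodule * (A.toSubmodule ⊔ N) := mul_le_mul' le_rfl hbb
    _ = A.toSubmodule ⊔ N := by rw [Submodule.mul_sup, A.isIdempotentElem_toSubmodule, hAN]
  have hbN : b ∈ N := by simpa using mul_mem_N A.one_mem
  exact (le_or_toSubmodule_sup_eq_of_covBy h hNB hAN.le hNN).resolve_left fun hNA => hbA (hNA hbN)

section Integral

variable [Algebra.IsIntegral R S]

theorem isRelInfraIntegral_sup_adjoin {b r : S} (hr : r ∈ A) (h2 : b ^ 2 - r * b ∈ A)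
    (h3 : b ^ 3 - r * b ^ 2 ∈ A) : IsRelInfraIntegral A (A ⊔ Algebra.adjoin R {b}) := by
  intro Q hQ
  let := Ideal.Quotient.field Q
  have mem_image {x : S} (hx : x ∈ A) :
      Ideal.Quotient.mk Q x ∈ A.map (Ideal.Quotient.mkₐ R Q) := ⟨x, hx, rfl⟩
  rw [Subalgebra.map_le]
  refine sup_le (Subalgebra.map_le.1 le_rfl) (Algebra.adjoin_le (Set.singleton_subset_iff.2 ?_))
  refine isTClosedIn_of_field _ _ _ (mem_image hr) ?_ ?_
  · simpa using mem_image h2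
  · simpa using mem_image h3

theorem exists_isRelInfraIntegral_of_not_isRelTClosed (hAB : A ≤ B) (h : ¬ IsRelTClosed A B) :
    ∃ D, A < D ∧ D ≤ B ∧ IsRelInfraIntegral A D := by
  simp only [IsRelTClosed, not_forall] at h
  obtain ⟨b, hb, r, hr, h2, h3, hbA⟩ := h
  refine ⟨A ⊔ Algebra.adjoin R {b}, ?_, ?_, isRelInfraIntegral_sup_adjoin hr h2 h3⟩
  · exact left_lt_sup.2 fun hle => hbA (hle (Algebra.self_mem_adjoin_singleton R b))
  · exact sup_le hAB (Algebra.adjoin_le (Set.singleton_subset_iff.2 hb))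

theorem isRelInfraIntegral_of_not_isRelTClosed (h : A ⋖ B) (ht : ¬ IsRelTClosed A B) :
    IsRelInfraIntegral A B := by
  obtain ⟨D, hAD, hDB, hD⟩ := exists_isRelInfraIntegral_of_not_isRelTClosed h.le ht
  exact (h.eq_or_eq hAD.le hDB).resolve_left hAD.ne' ▸ hD

-- If `x² ∉ (A : B)` then `x = a + x² b`, so that either `a = x (1 - x b)` is invertible modulo the
-- conductor or `x b` is idempotent modulo it, whence `x b ∈ A` by t-closedness.
theorem IsRelTClosed.exists_mul_sub_one_mem (ht : IsRelTClosed A B) (h : A ⋖ B)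
    {x : S} (hx : x ∈ B) (hxc : x ∉ relConductor A B) :
    ∃ y ∈ B, x * y - 1 ∈ relConductor A B := by
  rcases mem_relConductor_or_exists_add_mul h (B.pow_mem hx 2) with hx2 | hx2
  · have hxA : x ∈ A := ht.mem_of_sq_sub_mul_mem hx A.zero_mem (by simpa using hx2)
    obtain ⟨y, hy, hxy⟩ := exists_mul_sub_one_mem_relConductor h hxA hxc
    exact ⟨y, h.le hy, hxy⟩
  obtain ⟨a, ha, b, hb, hab⟩ := hx2 x hx
  by_cases hac : a ∈ relConductor A B
  · have hidem : (x * b) ^ 2 - 1 * (x * b) = -(a * b) := by linear_combination b * hab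
    have hxbA : x * b ∈ A := ht.mem_of_sq_sub_mul_mem (B.mul_mem hx hb) A.one_mem
      (hidem ▸ neg_mem (mul_mem_relConductor hac hb))
    have hxbc : x * b ∉ relConductor A B := fun hc => by
      have hx_eq : x = a + x * b * x := by linear_combination -hab
      exact hxc (hx_eq ▸ add_mem hac (mul_mem_relConductor hc hx))
    obtain ⟨s, hs, hxbs⟩ := exists_mul_sub_one_mem_relConductor h hxbA hxbc
    exact ⟨b * s, B.mul_mem hb (h.le hs), mul_assoc x b s ▸ hxbs⟩
  · obtain ⟨s, hs, has⟩ := exists_mul_sub_one_mem_relConductor h ha hac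
    refine ⟨(1 - x * b) * s, B.mul_mem (B.sub_mem B.one_mem (B.mul_mem hx hb)) (h.le hs), ?_⟩
    have ha_eq : x * ((1 - x * b) * s) - 1 = a * s - 1 := by linear_combination -s * hab
    rwa [ha_eq]

theorem IsRelInfraIntegral.not_isRelTClosed (hi : IsRelInfraIntegral A B) (h : A ⋖ B) :
    ¬ IsRelTClosed A B := by
  intro ht
  obtain ⟨Q, hQ, hQA⟩ := exists_isMaximal_forall_mem_iff h
  obtain ⟨b, hb, hbA⟩ := SetLike.exists_of_lt h.lt
  obtain ⟨a, ha, hba⟩ := isRelInfraIntegral_iff.1 hi Q hQ b hb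
  have hbac : b - a ∉ relConductor A B := fun hc =>
    hbA (by simpa using A.add_mem (mem_of_mem_relConductor hc) ha)
  obtain ⟨y, -, hy⟩ :=
    ht.exists_mul_sub_one_mem h (B.sub_mem hb (h.le ha)) hbac
  refine hQ.ne_top ((Ideal.eq_top_iff_one Q).2 ?_)
  simpa using Q.sub_mem (Q.mul_mem_right y hba) ((hQA _ (mem_of_mem_relConductor hy)).2 hy)

theorem mem_relConductor_of_mul_mem (h : A ⋖ B) {a b : S} (ha : a ∈ A) (hb : b ∈ B)
    (hab : a * b ∈ A) (hbA : b ∉ A) : a ∈ relConductor A B := by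
  by_contra hac
  obtain ⟨s, hs, has⟩ := exists_mul_sub_one_mem_relConductor h ha hac
  exact hbA (mem_of_mul_sub_one_mem_relConductor hb hs (mul_comm a s ▸ has) hab)

theorem IsRelTClosed.relConductor_le_of_le (ht : IsRelTClosed A B) (hAB : A ⋖ B)
    (hBC : B < C) (hle : relConductor A B ≤ relConductor B C) :
    relConductor B C ≤ relConductor A B := by
  intro x hx
  by_contra hxc
  have hxB := mem_of_mem_relConductor hx
  obtain ⟨y, hy, hxy⟩ := ht.exists_mul_sub_one_mem hAB hxB hxc
  refine hBC.not_ge (one_mem_relConductor.1 ?_)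
  have hxy' := mul_mem_relConductor hx (hBC.le hy)
  simpa using sub_mem hxy' (hle hxy)

theorem IsRelTClosed.mem_of_relConductor_le (ht : IsRelTClosed A C) (hAB : A ≤ B) (hBC : B ⋖ C)
    (hle : relConductor B C ≤ relConductor A C) {b r : S} (hb : b ∈ C) (hr : r ∈ B)
    (hβ : b ^ 2 - r * b ∈ relConductor B C) : b ∈ B := by
  by_cases hrc : r ∈ relConductor B C
  · have hb2 : b ^ 2 ∈ relConductor B C := by
      simpa using add_mem hβ (mul_mem_relConductor hrc hb)
    exact hAB (ht.mem_of_sq_sub_mul_mem hb A.zero_mem (by simpa using hle hb2))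
  · obtain ⟨s, hs, hrs⟩ := exists_mul_sub_one_mem_relConductor hBC hr hrc
    have hsb := C.mul_mem (hBC.le hs) hb
    have hidem : (s * b) ^ 2 - 1 * (s * b) ∈ relConductor B C := by
      have hsum : (s * b) ^ 2 - 1 * (s * b) = (b ^ 2 - r * b) * s ^ 2 + (r * s - 1) * (s * b) := by
        ring
      exact hsum ▸ add_mem (mul_mem_relConductor hβ (C.pow_mem (hBC.le hs) 2))
        (mul_mem_relConductor hrs hsb)
    have hsbA : s * b ∈ A := ht.mem_of_sq_sub_mul_mem hsb A.one_mem (hle hidem)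
    exact mem_of_mul_sub_one_mem_relConductor hb hr hrs (hAB hsbA)

-- For a counterexample `b` and `m ∈ (A : B)`, t-closedness gives `m b ∈ A`, so `m ∈ (B : C)`, as
-- otherwise `m` is invertible modulo `(B : C)` and `b ∈ B`. From `(A : B) ⊆ (B : C)` we deduce
-- `(B : C) ⊆ A`; modulo `(B : C)` either `b` is square-zero or a unit multiple of `b` is
-- idempotent.
theorem IsRelTClosed.top_of_covBy (ht : IsRelTClosed A C) (hAB : A ⋖ B) (hBC : B ⋖ C) :
    IsRelTClosed B C := by
  intro b hb r hr h2 h3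
  by_contra hbB
  by_cases hle : relConductor A B ≤ relConductor B C
  · have htAB : IsRelTClosed A B := fun b hb => ht b (hBC.le hb)
    have hle' : relConductor B C ≤ relConductor A C := relConductor_le_relConductor_of_le
      fun _ hx => mem_of_mem_relConductor (htAB.relConductor_le_of_le hAB hBC.lt hle hx)
    have hβb : (b ^ 2 - r * b) * b = b ^ 3 - r * b ^ 2 := by ring
    have hβ : b ^ 2 - r * b ∈ relConductor B C :=
      mem_relConductor_of_mul_mem hBC h2 hb (hβb ▸ h3) hbB
    exact hbB (ht.mem_of_relConductor_le hAB.le hBC hle' hb hr hβ)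
  · obtain ⟨m, hm, hmc⟩ := SetLike.not_le_iff_exists.1 hle
    have hmb := ht.mul_mem_of_mem_relConductor (hAB.le.trans hBC.le) hm hb hr h2 h3
    exact hmc (mem_relConductor_of_mul_mem hBC (hAB.le (mem_of_mem_relConductor hm)) hb
      (hAB.le hmb) hbB)

/-! ### Infra-integral chains -/

theorem IsRelInfraIntegral.exists_sub_algebraMap_mem (hi : IsRelInfraIntegral ⊥ A) (h : A ⋖ B)
    {a : S} (ha : a ∈ A) : ∃ r : R, a - algebraMap R S r ∈ relConductor A B := by
  obtain ⟨Q, hQ, hQA⟩ := exists_isMaximal_forall_mem_iff h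
  obtain ⟨_, ⟨r, rfl⟩, har⟩ := isRelInfraIntegral_iff.1 hi Q hQ a ha
  exact ⟨r, (hQA _ (A.sub_mem ha (A.algebraMap_mem r))).1 har⟩

theorem IsRelInfraIntegral.exists_mul_algebraMap_sub_one_mem (hi : IsRelInfraIntegral ⊥ A)
    (h : A ⋖ B) {a : S} (ha : a ∈ A) (hac : a ∉ relConductor A B) :
    ∃ r : R, a * algebraMap R S r - 1 ∈ relConductor A B := by
  obtain ⟨s, hs, has⟩ := exists_mul_sub_one_mem_relConductor h ha hac
  obtain ⟨r, hsr⟩ := hi.exists_sub_algebraMap_mem h hs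
  refine ⟨r, ?_⟩
  have hsub : a * algebraMap R S r - 1 = (a * s - 1) - (s - algebraMap R S r) * a := by ring
  exact hsub ▸ sub_mem has (mul_mem_relConductor hsr (h.le ha))

theorem IsRelInfraIntegral.exists_sup_span_singleton_eq (hi : IsRelInfraIntegral ⊥ B) (h : A ⋖ B) :
    ∃ b ∈ B, A.toSubmodule ⊔ (R ∙ b) = B.toSubmodule := by
  obtain ⟨b, hb, hAb⟩ :=
    exists_sup_mul_span_singleton_eq_of_not_isRelTClosed h
      ((hi.mono bot_le le_rfl).not_isRelTClosed h)
  have hAb_le : A.toSubmodule * (R ∙ b) ≤ A.toSubmodule ⊔ (R ∙ b) := by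
    refine Submodule.mul_le.2 fun a ha z hz => ?_
    obtain ⟨t, rfl⟩ := Submodule.mem_span_singleton.1 hz
    obtain ⟨r, hr⟩ := (hi.mono le_rfl h.le).exists_sub_algebraMap_mem h ha
    have hab : a * t • b = t • ((a - algebraMap R S r) * b + r • b) := by
      simp only [Algebra.smul_def]
      ring
    exact hab ▸ Submodule.smul_mem _ t (Submodule.add_mem_sup (mem_relConductor.1 hr b hb)
      (Submodule.smul_mem _ r (Submodule.mem_span_singleton_self b)))
  refine ⟨b, hb, le_antisymm ?_ (hAb ▸ sup_le le_sup_left hAb_le)⟩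
  exact sup_le (Subalgebra.toSubmodule.monotone h.le)
    ((Submodule.span_singleton_le_iff_mem ..).2 hb)

theorem IsRelInfraIntegral.covBy_toSubmodule (hi : IsRelInfraIntegral ⊥ B) (h : A ⋖ B) :
    A.toSubmodule ⋖ B.toSubmodule := by
  obtain ⟨b, hb, hAb⟩ := hi.exists_sup_span_singleton_eq h
  refine ⟨Subalgebra.toSubmodule.lt_iff_lt.2 h.lt, fun X hAX hXB => hXB.not_ge ?_⟩
  obtain ⟨x, hx, hxA⟩ := SetLike.exists_of_lt hAX
  obtain ⟨a, ha, z, hz, rfl⟩ := Submodule.mem_sup.1 (hAb ▸ hXB.le hx)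
  obtain ⟨t, rfl⟩ := Submodule.mem_span_singleton.1 hz
  have htc : algebraMap R S t ∉ relConductor A B := fun hc =>
    hxA (A.add_mem ha (Algebra.smul_def t b ▸ mem_relConductor.1 hc b hb))
  obtain ⟨s, hs⟩ := (hi.mono le_rfl h.le).exists_mul_algebraMap_sub_one_mem h
    (A.algebraMap_mem t) htc
  have htb : t • b ∈ X := by simpa using X.sub_mem hx (hAX.le ha)
  have hb_eq : b = s • t • b - (algebraMap R S t * algebraMap R S s - 1) * b := by
    simp only [Algebra.smul_def]
    ring
  have hbX : b ∈ X :=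
    hb_eq ▸ X.sub_mem (X.smul_mem s htb) (hAX.le (mem_relConductor.1 hs b hb))
  exact hAb ▸ sup_le hAX.le ((Submodule.span_singleton_le_iff_mem ..).2 hbX)

theorem IsRelInfraIntegral.isCatenarianFromTo (hi : IsRelInfraIntegral ⊥ T) :
    IsCatenarianFromTo ⊥ T :=
  .of_map Subalgebra.toSubmodule
    (fun _ _ _ hB hAB => (hi.mono le_rfl hB).covBy_toSubmodule hAB)
    (isCatenarianFromTo_of_isModularLattice _ _)

/-! ### Rearranging chains through the t-closure -/

variable [WellFoundedLT (Subalgebra R S)]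

theorem IsRelInfraIntegral.le_of_isTClosedIn (hi : IsRelInfraIntegral ⊥ A) (ht : IsTClosedIn T) :
    A ≤ T := by
  by_contra hAT
  obtain ⟨W, hW, hWA⟩ := exists_covBy_le_of_lt (inf_lt_right.2 hAT : T ⊓ A < A)
  exact (hi.mono bot_le hWA).not_isRelTClosed hW fun b hb r hr h2 h3 =>
    ⟨ht b r hr.1 h2.1 h3.1, hWA hb⟩

theorem IsTwoCatenarian.exists_covBy_covBy [WellFoundedGT (Subalgebra R S)]
    (h2 : IsTwoCatenarian R S) (hAB : A ⋖ B) (ht : IsRelTClosed A B) (hBC : B ⋖ C)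
    (hi : IsRelInfraIntegral B C) :
    ∃ D, (A ⋖ D ∧ IsRelInfraIntegral A D) ∧ D ⋖ C ∧ IsRelTClosed D C := by
  have hAC : ¬ IsRelInfraIntegral A C := fun h => (h.mono le_rfl hBC.le).not_isRelTClosed hAB ht
  obtain ⟨D, hAD, hDC, hiD⟩ := exists_isRelInfraIntegral_of_not_isRelTClosed
    (hAB.le.trans hBC.le) fun h => hi.not_isRelTClosed hBC (h.top_of_covBy hAB hBC)
  have hDC : D < C := hDC.lt_of_ne fun hDC => hAC (hDC ▸ hiD)
  obtain ⟨hAD, hDC⟩ := covBy_and_covBy_of_forall_steps_eq_two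
    (fun n hn => (steps_covBy_iff.1 hn).elim fun c hc => h2 A B C hAB hBC n c hc) hAD hDC
  refine ⟨D, ⟨hAD, hiD⟩, hDC, ?_⟩
  by_contra hn
  exact hAC (hiD.trans (isRelInfraIntegral_of_not_isRelTClosed hDC hn))

theorem IsTwoCatenarian.exists_steps_through_tClosure [WellFoundedGT (Subalgebra R S)]
    (h2 : IsTwoCatenarian R S) (hi : IsRelInfraIntegral ⊥ T) (ht : IsTClosedIn T) {n : ℕ}
    (hn : Steps (· ⋖ ·) n (⊥ : Subalgebra R S) ⊤) :
    ∃ p q, p + q = n ∧ Steps (· ⋖ ·) p ⊥ T ∧ Steps (· ⋖ ·) q T ⊤ := by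
  have hn' := hn.imp fun A B (hAB : A ⋖ B) =>
    (em (IsRelTClosed A B)).symm.imp
      (fun h => And.intro hAB (isRelInfraIntegral_of_not_isRelTClosed hAB h)) (And.intro hAB)
  obtain ⟨p, q, U, hpq, hp, hq⟩ := hn'.exists_sorted fun A B C hAB hBC =>
    h2.exists_covBy_covBy hAB.1 hAB.2 hBC.1 hBC.2
  have hiU : IsRelInfraIntegral ⊥ U :=
    hp.rel_of_cons .refl fun _ _ _ h h' => h.2.trans h'
  have htU : IsTClosedIn U := isRelTClosed_top.1 <|
    hq.rel_of_cons .refl fun _ _ _ h h' => h.2.trans h.1.le h'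
  obtain rfl : U = T := (hiU.le_of_isTClosedIn ht).antisymm (hi.le_of_isTClosedIn htU)
  exact ⟨p, q, hpq, hp.imp fun _ _ h => h.1, hq.imp fun _ _ h => h.1⟩

end Integral

theorem ResidualExtIsIso.exists_sub_mem {R' S' : Type*} [CommRing R'] [CommRing S'] {f : R' →+* S'}
    {Q : Ideal S'} [Q.IsPrime] [(Q.comap f).IsMaximal] (h : ResidualExtIsIso f Q) (t : S') :
    ∃ r, t - f r ∈ Q := by
  obtain ⟨y, hy⟩ := h.surjective (algebraMap S' Q.ResidueField t)
  obtain ⟨r, rfl⟩ := Ideal.algebraMap_residueField_surjective (Q.comap f) y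
  refine ⟨r, ?_⟩
  rw [← Ideal.algebraMap_residueField_eq_zero, map_sub, sub_eq_zero, ← hy]
  exact Ideal.ResidueField.map_algebraMap _ Q f rfl r

theorem IsInfraIntegral.isRelInfraIntegral_bot [Algebra.IsIntegral R S] (h : IsInfraIntegral R T) :
    IsRelInfraIntegral ⊥ T := by
  refine isRelInfraIntegral_iff.2 fun Q hQ t ht => ?_
  have := h.1
  have := Algebra.IsIntegral.tower_top (R := R) (S := T) (T := S)
  have hP : (Q.comap (algebraMap T S)).IsMaximal :=
    Ideal.isMaximal_comap_of_isIntegral_of_isMaximal Q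
  have hp : ((Q.comap (algebraMap T S)).comap (algebraMap R T)).IsMaximal :=
    Ideal.isMaximal_comap_of_isIntegral_of_isMaximal _
  obtain ⟨r, hr⟩ := (h.2 _ hP.isPrime).exists_sub_mem ⟨t, ht⟩
  exact ⟨_, ⟨r, rfl⟩, hr⟩

end Extension

theorem stmt_18_general {R S : Type*} [CommRing R] [CommRing S] [Algebra R S]
    (hFCP : IsFCPExt R S) (hint : Algebra.IsIntegral R S)
    (T : Subalgebra R S) (hT : IsTClosure T) :
    IsCatenarianExt R S ↔
      IsCatenarianFromTo T (⊤ : Subalgebra R S) ∧ IsTwoCatenarian R S := by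
  have := wellFoundedLT_of_forall_isChain_finite hFCP
  have := wellFoundedGT_of_forall_isChain_finite hFCP
  refine ⟨fun h => ⟨h.mono bot_le le_rfl, fun A B C hAB hBC n c hc => ?_⟩, fun ⟨hTS, h2⟩ => ?_⟩
  · exact isCatenarianFromTo_iff.1 (h.mono bot_le le_top) n 2 (steps_covBy_iff.2 ⟨c, hc⟩)
      (.cons hAB (.cons hBC (.nil C)))
  · have hRT : IsRelInfraIntegral ⊥ T := hT.1.isRelInfraIntegral_bot
    refine isCatenarianFromTo_iff.2 fun n m hn hm => ?_
    obtain ⟨p, q, rfl, hp, hq⟩ := h2.exists_steps_through_tClosure hRT hT.2 hn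
    obtain ⟨p', q', rfl, hp', hq'⟩ := h2.exists_steps_through_tClosure hRT hT.2 hm
    rw [isCatenarianFromTo_iff.1 hRT.isCatenarianFromTo p p' hp hp',
      isCatenarianFromTo_iff.1 hTS q q' hq hq']

/-- Let `R ⊆ S` be an integral FCP extension with t-closure `T`.
Then `R ⊆ S` is catenarian iff `T ⊆ S` is catenarian and `R ⊆ S` is 2-catenarian. -/
theorem stmt_18 {R S : Type*} [CommRing R] [CommRing S] [Algebra R S]
    (hinj : Function.Injective (algebraMap R S)) (hFCP : IsFCPExt R S)
    (hint : Algebra.IsIntegral R S)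
    (T : Subalgebra R S) (hT : IsTClosure T) :
    IsCatenarianExt R S ↔
      IsCatenarianFromTo T (⊤ : Subalgebra R S) ∧ IsTwoCatenarian R S := by
  exact stmt_18_general hFCP hint T hT
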